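/- Let (A, m) be a complete Noetherian local ring and M a nonzero finitely generated A-module. Suppose there is an integer j such that the local cohomology modules H^i_m(M) vanish for all i ≠ j and H^j_m(M) is an injective A-module. Then the annihilator Ann_A(M) is zero; equivalently, Supp(M) = Spec(A). -/

import Mathlib

/-!
Write `H` for `H^j_m(M)`.  The annihilator of `M` kills every `Ext^j(A/m^t, M)`, hence `H`, so it
is enough that `H` is faithful.

* An injective module `H` over a local ring containing a nonzero `y` with `m y = 0` is faithful
  (`annihilator_eq_bot_of_injective`): for `a ≠ 0` the annihilator of `a` lies in `m`, so
  `r a ↦ r y` is well defined on `(a)`; an extension `h : A → H` has `a h(1) = y ≠ 0`.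
* Every element of `H` comes from some `Ext^j(A/m^t, M)` and so is killed by `m^t`; hence `H` has
  such a `y` as soon as `H ≠ 0` (`exists_socle`).
* `H ≠ 0`, since a finitely generated module `M` all of whose local cohomology vanishes is zero
  (`Dies.subsingleton`).  If `Hom(A/m, M) = 0` there is an `M`-regular `r ∈ m`, and the vanishing
  passes to `M/rM` through `0 → M → M → M/rM → 0` (`Dies.of_shortExact`).  The kernels of the
  successive quotients of `M` strictly increase, so by noetherianity the process reaches a nonzero
  quotient `Q` with `Hom(A/m, Q) ≠ 0`; but `Hom(A/m, Q)` embeds into `H^0_m(Q)`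
  (`Dies.hom_eq_zero`).

The vanishing of local cohomology is used in the form of the predicate `Dies`, phrased with
cocycles on projective resolutions of the `A/m^t`; `Rep` translates between such cocycles and
elements of `Ext`.
-/

universe u

namespace LC

open CategoryTheory Limits Opposite

/-! ### Cocycles and elements of `Ext` -/

variable {A : Type u} [CommRing A]

/-- The contravariant functor `Hom(-, Y)`, as a functor to the opposite category; `Ext` is defined
by left deriving it. -/
noncomputable abbrev yF (Y : ModuleCat.{u} A) : ModuleCat.{u} A ⥤ (ModuleCat.{u} A)ᵒᵖ :=
  ((linearYoneda A (ModuleCat.{u} A)).obj Y).rightOp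

/-- The complex `Hom(P, Y)`, as a chain complex in the opposite category. -/
noncomputable abbrev yC {X : ModuleCat.{u} A} (P : ProjectiveResolution X) (Y : ModuleCat.{u} A) :
    ChainComplex (ModuleCat.{u} A)ᵒᵖ ℕ :=
  ((yF Y).mapHomologicalComplex _).obj P.complex

/-- The module `Ext^n(X, Y)`, in the version that enters the definition of local cohomology. -/
noncomputable abbrev ExtMod (n : ℕ) (X Y : ModuleCat.{u} A) : ModuleCat.{u} A :=
  ((Ext A (ModuleCat.{u} A) n).obj (op X)).obj Y

/-- The identification of `Ext^n(X, Y)`, seen in the opposite category, with the homology of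
`Hom(P, Y)`. -/
noncomputable def derIso {X : ModuleCat.{u} A} (P : ProjectiveResolution X) (Y : ModuleCat.{u} A)
    (n : ℕ) : ((yF Y).leftDerived n).obj X ≅ (yC P Y).homology n :=
  P.isoLeftDerivedObj (yF Y) n

/-- The morphism `f : P_n ⟶ Y` is a cocycle and `e` is its class in `Ext^n(X, Y)`.  Since `yC P Y`
lives in the opposite category, its opcycles are the cocycles of `Hom(P, Y)`, and `z` is `f` seen
as such. -/
def Rep {X : ModuleCat.{u} A} (P : ProjectiveResolution X) (Y : ModuleCat.{u} A) (n : ℕ)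
    (f : P.complex.X n ⟶ Y) (e : ExtMod n X Y) : Prop :=
  ∃ z : ((yC P Y).opcycles n).unop,
    ((yC P Y).pOpcycles n).unop.hom z = f ∧
    ((derIso P Y n).hom ≫ (yC P Y).homologyι n).unop.hom z = e

variable {X X' : ModuleCat.{u} A} (P : ProjectiveResolution X) (P' : ProjectiveResolution X')
  (Y : ModuleCat.{u} A) (n : ℕ)

lemma Rep.exists (e : ExtMod n X Y) : ∃ f, Rep P Y n f e := by
  have : Epi ((derIso P Y n).hom ≫ (yC P Y).homologyι n).unop :=
    inferInstance
  obtain ⟨z, hz⟩ := (ModuleCat.epi_iff_surjective _).1 this e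
  exact ⟨_, z, rfl, hz⟩

variable {P P' Y n}

lemma Rep.cocycle {f : P.complex.X n ⟶ Y} {e : ExtMod n X Y} (h : Rep P Y n f e) (k : ℕ) :
    P.complex.d k n ≫ f = 0 := by
  obtain ⟨z, rfl, -⟩ := h
  have := congrArg Quiver.Hom.unop ((yC P Y).d_pOpcycles k n)
  exact congrArg (fun g => g.hom z) this

lemma Rep.of_cocycle {f : P.complex.X n ⟶ Y} (h : ∀ k, P.complex.d k n ≫ f = 0) :
    ∃ e, Rep P Y n f e := by
  let K := yC P Y
  -- The cocycle `f` as a morphism `A ⟶ Hom(P_n, Y)`, so that it can be factored through opcycles.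
  let l : (K.X n) ⟶ op (ModuleCat.of A A) :=
    (ModuleCat.ofHom (LinearMap.toSpanSingleton A (P.complex.X n ⟶ Y) f) :
      ModuleCat.of A A ⟶ (K.X n).unop).op
  have hl : K.d ((ComplexShape.down ℕ).prev n) n ≫ l = 0 := by
    apply Quiver.Hom.unop_inj
    ext
    change P.complex.d _ n ≫ ((1 : A) • f) = 0
    rw [one_smul, h]
  let z := (K.descOpcycles l _ rfl hl).unop.hom (1 : A)
  refine ⟨_, z, ?_, rfl⟩
  have := congrArg (fun g => g.unop.hom (1 : A)) (K.p_descOpcycles l _ rfl hl)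
  refine this.trans ?_
  change (1 : A) • f = f
  rw [one_smul]

lemma Rep.smul {f : P.complex.X n ⟶ Y} {e : ExtMod n X Y} (h : Rep P Y n f e) (a : A) :
    Rep P Y n (a • f) (a • e) := by
  obtain ⟨z, rfl, rfl⟩ := h
  exact ⟨a • z, map_smul _ _ _, map_smul _ _ _⟩

lemma Rep.map {f : P'.complex.X n ⟶ Y} {e : ExtMod n X' Y} (h : Rep P' Y n f e)
    (q : X ⟶ X') (φ : P.complex ⟶ P'.complex) (comm : φ.f 0 ≫ P'.π.f 0 = P.π.f 0 ≫ q) :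
    Rep P Y n (φ.f n ≫ f) ((((Ext A (ModuleCat.{u} A) n).map q.op).app Y).hom e) := by
  obtain ⟨z, rfl, rfl⟩ := h
  let ψ := ((yF Y).mapHomologicalComplex (ComplexShape.down ℕ)).map φ
  refine ⟨(HomologicalComplex.opcyclesMap ψ n).unop.hom z, ?_, ?_⟩
  · exact congrArg (fun g => g.unop.hom z) (HomologicalComplex.p_opcyclesMap ψ n)
  · have h1 : ((yF Y).leftDerived n).map q ≫ (derIso P' Y n).hom =
        (derIso P Y n).hom ≫ HomologicalComplex.homologyMap ψ n :=
      ProjectiveResolution.isoLeftDerivedObj_hom_naturality q P P' φ comm (yF Y) n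
    have h2 : ((yF Y).leftDerived n).map q ≫ (derIso P' Y n).hom ≫
        (yC P' Y).homologyι n = ((derIso P Y n).hom ≫ (yC P Y).homologyι n) ≫
        HomologicalComplex.opcyclesMap ψ n := by
      rw [reassoc_of% h1, Category.assoc]
      congr 1
      exact HomologicalComplex.homologyι_naturality ψ n
    exact (congrArg (fun g => g.unop.hom z) h2).symm

/-- Quantifying over all `k` loses nothing: the differential `d n k` is zero unless `k + 1 = n`. -/
lemma Rep.eq_zero_iff {f : P.complex.X n ⟶ Y} {e : ExtMod n X Y} (h : Rep P Y n f e) :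
    e = 0 ↔ ∃ (k : ℕ) (v : P.complex.X k ⟶ Y), P.complex.d n k ≫ v = f := by
  obtain ⟨z, rfl, rfl⟩ := h
  set K := yC P Y
  let I := derIso P Y n
  have hI : Function.Injective I.hom.unop.hom := (ModuleCat.mono_iff_injective _).1 inferInstance
  have h1 : (I.hom ≫ K.homologyι n).unop.hom z = 0 ↔ (K.homologyι n).unop.hom z = 0 := by
    constructor
    · intro h
      exact hI (h.trans (map_zero _).symm)
    · intro h
      exact (congrArg I.hom.unop.hom h).trans (map_zero _)
  have hp : Function.Injective (K.pOpcycles n).unop.hom :=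
    (ModuleCat.mono_iff_injective _).1 inferInstance
  refine h1.trans ⟨fun h => ?_, ?_⟩
  · let j := (ComplexShape.down ℕ).next n
    let S : ShortComplex (ModuleCat.{u} A)ᵒᵖ :=
      ShortComplex.mk _ _ (K.homologyι_comp_fromOpcycles n j)
    have hS : S.Exact := S.exact_of_f_is_kernel (K.homologyIsKernel n j rfl)
    have hS' := hS.unop
    obtain ⟨v, hv⟩ := (ShortComplex.moduleCat_exact_iff _).1 hS' z h
    refine ⟨j, v, ?_⟩
    have := congrArg (fun g => g.unop.hom v) (K.p_fromOpcycles n j)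
    refine Eq.trans this.symm ?_
    exact congrArg (K.pOpcycles n).unop.hom hv
  · rintro ⟨k, v, hv⟩
    have : (K.fromOpcycles n k).unop.hom v = z := by
      apply hp
      refine Eq.trans ?_ hv
      exact congrArg (fun g => g.unop.hom v) (K.p_fromOpcycles n k)
    rw [← this]
    exact congrArg (fun g => g.unop.hom v) (K.homologyι_comp_fromOpcycles n k)

/-! ### Modules whose local cohomology vanishes -/

/-- The module `A/I^t`. -/
noncomputable abbrev pX (I : Ideal A) (t : ℕ) : ModuleCat.{u} A := ModuleCat.of A (A ⧸ I ^ t)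

/-- A chosen projective resolution of `A/I^t`. -/
noncomputable abbrev pP (I : Ideal A) (t : ℕ) : ProjectiveResolution (pX I t) :=
  projectiveResolution (pX I t)

/-- The augmentation `P_0 ⟶ X` of a projective resolution. -/
noncomputable def aug {X : ModuleCat.{u} A} (P : ProjectiveResolution X) : P.complex.X 0 ⟶ X :=
  P.π.f 0

instance {X : ModuleCat.{u} A} (P : ProjectiveResolution X) : Epi (aug P) :=
  inferInstanceAs (Epi (P.π.f 0))

lemma d_aug {X : ModuleCat.{u} A} (P : ProjectiveResolution X) (k : ℕ) :
    P.complex.d k 0 ≫ aug P = 0 := by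
  have h := P.π.comm k 0
  rw [HomologicalComplex.single_obj_d, comp_zero] at h
  exact h.symm

/-- Every element of every `Ext^i(A/I^t, M)`, given by a cocycle `f`, becomes zero after pulling back
along some surjection `q : A/I^s ⟶ A/I^t`, lifted to a map `φ` of resolutions.  Neither `s ≥ t` nor
that `q` is the canonical projection is demanded: surjectivity is all that is needed, and it is
stable under composition. -/
def Dies (I : Ideal A) (M : ModuleCat.{u} A) : Prop :=
  ∀ (t i : ℕ) (f : (pP I t).complex.X i ⟶ M), (∀ k, (pP I t).complex.d k i ≫ f = 0) →
    ∃ (s : ℕ) (q : pX I s ⟶ pX I t) (φ : (pP I s).complex ⟶ (pP I t).complex),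
      Epi q ∧ φ.f 0 ≫ aug (pP I t) = aug (pP I s) ≫ q ∧
      ∃ (k : ℕ) (v : (pP I s).complex.X k ⟶ M), (pP I s).complex.d i k ≫ v = φ.f i ≫ f

/-- A fragment of the long exact sequence: a class in `Ext^i(A/I^t, X₃)` dies after its connecting
image in `Ext^(i+1)(A/I^t, X₁)` and then a lift to `Ext^i(A/I^s, X₂)` have been made to die. -/
lemma Dies.of_shortExact {I : Ideal A} {S : ShortComplex (ModuleCat.{u} A)} (hS : S.ShortExact)
    (h₁ : Dies I S.X₁) (h₂ : Dies I S.X₂) : Dies I S.X₃ := by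
  intro t i f hf
  have := hS.mono_f
  have := hS.epi_g
  let g : (pP I t).complex.X i ⟶ S.X₂ := Projective.factorThru f S.g
  have hg : g ≫ S.g = f := Projective.factorThru_comp f S.g
  -- `l` represents the image of `f` under the connecting map.
  let l := hS.exact.lift ((pP I t).complex.d (i + 1) i ≫ g) (by rw [Category.assoc, hg, hf])
  have hl : l ≫ S.f = (pP I t).complex.d (i + 1) i ≫ g := hS.exact.lift_f _ _
  obtain ⟨s, q, φ, hq, hφ, k, v, hv⟩ := h₁ t (i + 1) l (fun k => by
    rw [← cancel_mono S.f, Category.assoc, hl, zero_comp, HomologicalComplex.d_comp_d_assoc,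
      zero_comp])
  obtain ⟨w, hw⟩ : ∃ w : (pP I s).complex.X i ⟶ S.X₁,
      (pP I s).complex.d (i + 1) i ≫ w = φ.f (i + 1) ≫ l := by
    by_cases hk : k = i
    · subst hk; exact ⟨v, hv⟩
    · refine ⟨0, ?_⟩
      rw [← hv, (pP I s).complex.shape _ _ (fun h => hk (Nat.succ_injective h)), comp_zero,
        zero_comp]
  -- Since `φ` pulls the connecting class back to a coboundary `d w`, the pullback of `f` lifts to
  -- the cocycle `g'`.
  let g' : (pP I s).complex.X i ⟶ S.X₂ := φ.f i ≫ g - w ≫ S.f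
  have hg' : ∀ k, (pP I s).complex.d k i ≫ g' = 0 := by
    intro k
    by_cases hk : k = i + 1
    · subst hk
      rw [Preadditive.comp_sub, ← φ.comm_assoc, ← hl, reassoc_of% hw, sub_self]
    · rw [(pP I s).complex.shape _ _ (fun h => hk h.symm), zero_comp]
  obtain ⟨r, q', φ', hq', hφ', k', v', hv'⟩ := h₂ s i g' hg'
  refine ⟨r, q' ≫ q, φ' ≫ φ, epi_comp _ _, ?_, k', v' ≫ S.g, ?_⟩
  · rw [HomologicalComplex.comp_f, Category.assoc, hφ, reassoc_of% hφ']
  · rw [reassoc_of% hv', Preadditive.sub_comp, Category.assoc, hg, Category.assoc, S.zero,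
      comp_zero, sub_zero, HomologicalComplex.comp_f, Category.assoc]

/-- In degree zero there are no coboundaries, so `Hom(A/I^t, M)` injects into the colimit. -/
lemma Dies.hom_eq_zero {I : Ideal A} {M : ModuleCat.{u} A} (h : Dies I M) (t : ℕ)
    (g : pX I t ⟶ M) : g = 0 := by
  obtain ⟨s, q, φ, hq, hφ, k, v, hv⟩ := h t 0 (aug (pP I t) ≫ g) (fun k => by
    rw [← Category.assoc, d_aug, zero_comp])
  rw [(pP I s).complex.shape _ _ (by simp), zero_comp, reassoc_of% hφ] at hv
  rw [← cancel_epi q, ← cancel_epi (aug (pP I s)), ← hv, comp_zero, comp_zero]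

/-- A finitely generated module with vanishing local cohomology is zero. -/
lemma Dies.subsingleton [IsNoetherianRing A] [IsLocalRing A] (M : Type u) [AddCommGroup M]
    [Module A M] [Module.Finite A M] (h : Dies (IsLocalRing.maximalIdeal A) (ModuleCat.of A M)) :
    Subsingleton M := by
  -- Noetherian induction on the kernel `N` of a surjection from `M` onto `Q`.
  suffices H : ∀ (N : Submodule A M) (Q : Type u) [AddCommGroup Q] [Module A Q]
      (f : M →ₗ[A] Q), Function.Surjective f → LinearMap.ker f = N →
      Dies (IsLocalRing.maximalIdeal A) (ModuleCat.of A Q) → Subsingleton Q from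
    H ⊥ M LinearMap.id Function.surjective_id (by simp) h
  intro N
  induction N using WellFoundedGT.induction with
  | ind N ih =>
  intro Q _ _ f hf hN hQ
  by_contra hnt
  rw [not_subsingleton_iff_nontrivial] at hnt
  have : Module.Finite A Q := Module.Finite.of_surjective f hf
  have hsub : Subsingleton ((A ⧸ IsLocalRing.maximalIdeal A ^ 1) →ₗ[A] Q) := by
    refine subsingleton_of_forall_eq 0 fun g => ?_
    have := hQ.hom_eq_zero 1 (ModuleCat.ofHom g)
    exact congrArg ModuleCat.Hom.hom this
  obtain ⟨r, hr, hreg⟩ := IsSMulRegular.subsingleton_linearMap_iff.1 hsub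
  rw [Ideal.annihilator_quotient, pow_one] at hr
  -- Replace `Q` by `Q/rQ`, which is nonzero by Nakayama and has a strictly larger kernel.
  let R : Submodule A Q := LinearMap.range (LinearMap.lsmul A Q r)
  have hR : R ≠ ⊤ := by
    intro hR
    refine Submodule.top_ne_ideal_smul_of_le_jacobson_annihilator (R := A) (M := Q)
      (I := IsLocalRing.maximalIdeal A) (IsLocalRing.maximalIdeal_le_jacobson _) ?_
    refine le_antisymm (hR.ge.trans ?_) le_top
    rintro _ ⟨y, rfl⟩
    exact Submodule.smul_mem_smul hr trivial
  have hnt' : Nontrivial (Q ⧸ R) := Submodule.Quotient.nontrivial_iff.2 hR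
  refine not_subsingleton (Q ⧸ R) (ih (LinearMap.ker (R.mkQ ∘ₗ f)) ?_ (Q ⧸ R) (R.mkQ ∘ₗ f)
    (R.mkQ_surjective.comp hf) rfl ?_)
  · rw [← hN]
    refine lt_of_le_of_ne (LinearMap.ker_le_ker_comp f _) fun heq => ?_
    obtain ⟨y, hy⟩ := exists_ne (0 : Q)
    obtain ⟨x, rfl⟩ := hf y
    have hx : r • x ∈ LinearMap.ker (R.mkQ ∘ₗ f) := by
      rw [LinearMap.mem_ker, LinearMap.comp_apply, Submodule.mkQ_apply,
        Submodule.Quotient.mk_eq_zero]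
      exact ⟨f x, by simp⟩
    rw [← heq, LinearMap.mem_ker, map_smul] at hx
    exact hy (hreg.right_eq_zero_of_smul hx)
  · let S : ShortComplex (ModuleCat.{u} A) :=
      ShortComplex.mk (ModuleCat.ofHom (LinearMap.lsmul A Q r)) (ModuleCat.ofHom R.mkQ) (by
        ext x
        exact (Submodule.Quotient.mk_eq_zero R).2 ⟨x, rfl⟩)
    have hS : S.ShortExact :=
      { exact := (ShortComplex.moduleCat_exact_iff _).2 fun x hx =>
          (Submodule.Quotient.mk_eq_zero R).1 hx
        mono_f := (ModuleCat.mono_iff_injective _).2 hreg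
        epi_g := (ModuleCat.epi_iff_surjective _).2 R.mkQ_surjective }
    exact Dies.of_shortExact hS hQ hQ

/-! ### Local cohomology as a filtered colimit -/

section colim

variable (I : Ideal A) (i : ℕ) (M : ModuleCat.{u} A)

/-- The directed system `t ↦ Ext^i(A/I^t, M)` with colimit `H^i_I(M)`. -/
noncomputable def ev : (ℕᵒᵖ)ᵒᵖ ⥤ ModuleCat.{u} A :=
  localCohomology.diagram (localCohomology.idealPowersDiagram I) i ⋙ (evaluation _ _).obj M

instance : PreservesColimit (ev I i M) (forget (ModuleCat.{u} A)) :=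
  have : PreservesFilteredColimitsOfSize.{0, 0} (forget (ModuleCat.{u} A)) :=
    preservesSmallestFilteredColimits_of_preservesFilteredColimits _
  inferInstance

/-- Colimits of functors are computed pointwise. -/
noncomputable def evIso : (localCohomology I i).obj M ≅ colimit (ev I i M) :=
  colimitObjIsoColimitCompEvaluation _ _

lemma ev_map_epi {a b : (ℕᵒᵖ)ᵒᵖ} (w : a ⟶ b) :
    ∃ q : pX I b.unop.unop ⟶ pX I a.unop.unop, Epi q ∧
      (ev I i M).map w = ((Ext A (ModuleCat.{u} A) i).map q.op).app M := by
  refine ⟨(localCohomology.ringModIdeals (localCohomology.idealPowersDiagram I)).map w.unop,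
    ?_, rfl⟩
  refine (ModuleCat.epi_iff_surjective _).2 fun x => ?_
  obtain ⟨y, rfl⟩ := Ideal.Quotient.mk_surjective x
  exact ⟨Ideal.Quotient.mk _ y, rfl⟩

lemma dies_of_subsingleton (h : ∀ i, Subsingleton ((localCohomology I i).obj M)) : Dies I M := by
  intro t i f hf
  obtain ⟨e, he⟩ := Rep.of_cocycle hf
  have hsub : Subsingleton (colimit (ev I i M) : ModuleCat.{u} A) :=
    (evIso I i M).toLinearEquiv.symm.toEquiv.subsingleton
  obtain ⟨b, w, hw⟩ := Concrete.colimit_rep_eq_zero A (ev I i M) (op (op t)) e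
    (Subsingleton.elim _ _)
  obtain ⟨q, hq, hqw⟩ := ev_map_epi I i M w
  rw [hqw] at hw
  refine ⟨b.unop.unop, q, ProjectiveResolution.lift q _ _, hq,
    ProjectiveResolution.lift_commutes_zero _ _ _, ?_⟩
  exact (he.map q _ (ProjectiveResolution.lift_commutes_zero _ _ _)).eq_zero_iff.1 hw

lemma exists_rep (x : (localCohomology I i).obj M) :
    ∃ (t : ℕ) (l : ExtMod i (pX I t) M →ₗ[A] (localCohomology I i).obj M) (e : _), l e = x := by
  obtain ⟨j, e, he⟩ := Concrete.colimit_exists_rep (ev I i M) ((evIso I i M).hom x)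
  refine ⟨j.unop.unop, (colimit.ι (ev I i M) j ≫ (evIso I i M).inv).hom, e, ?_⟩
  change (evIso I i M).inv (colimit.ι (ev I i M) j e) = x
  rw [he]
  simp

lemma smul_ext_eq_zero_of_annihilator_right {X : ModuleCat.{u} A} (e : ExtMod i X M) {a : A}
    (ha : a ∈ Module.annihilator A M) : a • e = 0 := by
  obtain ⟨f, hf⟩ := Rep.exists (projectiveResolution X) M i e
  refine (hf.smul a).eq_zero_iff.2 ⟨0, 0, ?_⟩
  rw [comp_zero]
  ext x
  exact (Module.mem_annihilator.1 ha (f x)).symm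

/-- Multiplication by `a` on a resolution of `X` lifts the zero endomorphism of `X`, so it is
null-homotopic. -/
lemma smul_ext_eq_zero_of_annihilator_left {X : ModuleCat.{u} A} (e : ExtMod i X M) {a : A}
    (ha : a ∈ Module.annihilator A X) : a • e = 0 := by
  let P := projectiveResolution X
  obtain ⟨f, hf⟩ := Rep.exists P M i e
  have hP : (a • 𝟙 P.complex) ≫ P.π = 0 := by
    ext x
    have h : (aug P).hom (a • x) = 0 :=
      (map_smul (aug P).hom a x).trans (Module.mem_annihilator.1 ha _)
    exact h
  let H : Homotopy (a • 𝟙 P.complex) 0 := ProjectiveResolution.liftHomotopyZero _ hP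
  refine (hf.smul a).eq_zero_iff.2 ⟨_, H.hom ((ComplexShape.down ℕ).next i) i ≫ f, ?_⟩
  have h := H.comm i
  have h2 : prevD i H.hom ≫ f = 0 := by
    simp only [prevD_eq_toPrev_dTo, Category.assoc]
    simp [HomologicalComplex.dTo, hf.cocycle]
  have h3 := congrArg (fun g => g ≫ f) h
  simp only [HomologicalComplex.zero_f, add_zero, Preadditive.add_comp, h2] at h3
  rw [← Category.assoc]
  refine Eq.trans ?_ (h3.symm.trans ?_)
  · rfl
  · simp

end colim

/-! ### Injective modules with nonzero socle -/

lemma annihilator_eq_bot_of_injective [IsLocalRing A] (H : Type u) [AddCommGroup H] [Module A H]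
    [Module.Injective A H] (y : H) (hy : y ≠ 0)
    (hm : ∀ a ∈ IsLocalRing.maximalIdeal A, a • y = 0) : Module.annihilator A H = ⊥ := by
  rw [eq_bot_iff]
  intro a ha
  rw [Ideal.mem_bot]
  by_contra ha0
  let p := LinearMap.toSpanSingleton A A a
  -- `A ⧸ ker p` is the ideal `(a)`, embedded in `A` by `f`; `g` sends `a` to `y`.
  let f : (A ⧸ LinearMap.ker p) →ₗ[A] A := (LinearMap.ker p).liftQ p le_rfl
  let g : (A ⧸ LinearMap.ker p) →ₗ[A] H :=
    (LinearMap.ker p).liftQ (LinearMap.toSpanSingleton A H y) (by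
      intro r hr
      have hr' : r * a = 0 := hr
      refine hm r fun hu => ha0 ?_
      exact (hu.mul_right_eq_zero).1 hr')
  obtain ⟨h, hh⟩ := Module.Injective.out f
    (LinearMap.ker_eq_bot.1 (Submodule.ker_liftQ_eq_bot _ _ _ le_rfl)) g
  have h1 : h a = y := by
    have h2 := hh (Submodule.Quotient.mk 1)
    simpa only [f, g, p, Submodule.liftQ_apply, LinearMap.toSpanSingleton_apply, one_smul] using
      h2.trans (one_smul A y)
  apply hy
  rw [← h1, ← mul_one a, ← smul_eq_mul, map_smul, Module.mem_annihilator.1 ha]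

lemma exists_socle {I : Ideal A} {H : Type u} [AddCommGroup H] [Module A H] (t : ℕ) (x : H)
    (hx : x ≠ 0) (h : ∀ a ∈ I ^ t, a • x = 0) : ∃ y : H, y ≠ 0 ∧ ∀ a ∈ I, a • y = 0 := by
  induction t generalizing x with
  | zero => exact absurd (by simpa using h 1 (by simp)) hx
  | succ t ih =>
    by_cases hI : ∀ a ∈ I, a • x = 0
    · exact ⟨x, hx, hI⟩
    · push Not at hI
      obtain ⟨a, ha, hax⟩ := hI
      refine ih (a • x) hax fun b hb => ?_
      rw [smul_smul]
      exact h _ (by rw [pow_succ]; exact Ideal.mul_mem_mul hb ha)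

end LC

theorem statement7 (A : Type u) [CommRing A] [IsNoetherianRing A] [IsLocalRing A]
    [IsAdicComplete (IsLocalRing.maximalIdeal A) A]
    (M : Type u) [AddCommGroup M] [Module A M] [Module.Finite A M] [Nontrivial M]
    (j : ℕ)
    (hvanish : ∀ i : ℕ, i ≠ j →
      Subsingleton ↥((localCohomology (IsLocalRing.maximalIdeal A) i).obj (ModuleCat.of A M)))
    (hinj : Module.Injective A
      ↥((localCohomology (IsLocalRing.maximalIdeal A) j).obj (ModuleCat.of A M))) :
    Module.annihilator A M = ⊥ ∧ Module.support A M = Set.univ := by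
  suffices h : Module.annihilator A M = ⊥ by
    refine ⟨h, ?_⟩
    rw [Module.support_eq_zeroLocus, h]
    simp
  set H := (localCohomology (IsLocalRing.maximalIdeal A) j).obj (ModuleCat.of A M)
  have hH : Nontrivial H := by
    rw [← not_subsingleton_iff_nontrivial]
    intro hs
    have hall : ∀ i, Subsingleton
        ((localCohomology (IsLocalRing.maximalIdeal A) i).obj (ModuleCat.of A M)) := by
      intro i
      by_cases hi : i = j
      · subst hi; exact hs
      · exact hvanish i hi
    exact not_subsingleton M (LC.Dies.subsingleton M (LC.dies_of_subsingleton _ _ hall))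
  obtain ⟨x, hx⟩ := exists_ne (0 : H)
  obtain ⟨t, l, e, rfl⟩ := LC.exists_rep _ _ _ x
  have hke : ∀ a ∈ IsLocalRing.maximalIdeal A ^ t, a • e = 0 := fun a ha =>
    LC.smul_ext_eq_zero_of_annihilator_left _ _ e (by
      rwa [Ideal.annihilator_quotient (I := IsLocalRing.maximalIdeal A ^ t)])
  obtain ⟨y, hy, hym⟩ := LC.exists_socle (I := IsLocalRing.maximalIdeal A) t _ hx fun a ha => by
    rw [← map_smul, hke a ha, map_zero]
  rw [eq_bot_iff, ← LC.annihilator_eq_bot_of_injective H y hy hym]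
  intro a ha
  rw [Module.mem_annihilator]
  intro z
  obtain ⟨t, l, e, rfl⟩ := LC.exists_rep _ _ _ z
  rw [← map_smul, LC.smul_ext_eq_zero_of_annihilator_right _ _ _ ha, map_zero]
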